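/- arXiv:1906.01151 — 2 statements merged into one kernel-verified Lean document; each statement's English description precedes it below -/
import Mathlib

section
/- Let (s_n)_{n≥1} be a sequence of real numbers with 0 ≤ s_n ≤ 1 for all n, and set S_n := ∑_{k=1}^n s_k. Let a, b ∈ ℕ with 2 ≤ a < b, let γ > 0, and suppose S_{a−1} ≥ γ. Then (γ/(γ+1))·(log S_b − log S_{a−1}) ≤ ∑_{k=a}^b s_k/S_k ≤ (1/(γ·log((γ+1)/γ)))·(log S_b − log S_{a−1}). -/
/-- Partial sum `S_n = ∑_{k=1}^n s_k`. -/
noncomputable def partialSum (s : ℕ → ℝ) (n : ℕ) : ℝ := ∑ k ∈ Finset.Icc 1 n, s k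

/-!
Since `s_k = S_k - S_{k-1}`, the sum of `s_k / S_k` is a right-endpoint Riemann sum for
`∫ dx / x` over `[S_{a-1}, S_b]`, hence at most `log S_b - log S_{a-1}`. Conversely each increment
of `log S` is at most `s_k / S_{k-1}`, which exceeds `s_k / S_k` by the factor `S_k / S_{k-1}`; if
`s_k ≤ M`, this factor is at most `(γ + M) / γ` because `S_{k-1} ≥ γ`. Finally the constant
`1 / (γ log ((γ + 1) / γ))` is at least `1`, because `log (1 + 1 / γ) ≤ 1 / γ`.
-/

section LogIncrement

variable {x y C : ℝ}

theorem log_sub_log_le_sub_div (hx : 0 < x) (hy : 0 < y) :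
    Real.log y - Real.log x ≤ (y - x) / x := by
  rw [← Real.log_div hy.ne' hx.ne', sub_div, div_self hx.ne']
  exact Real.log_le_sub_one_of_pos (div_pos hy hx)

theorem sub_div_le_log_sub_log (hx : 0 < x) (hy : 0 < y) :
    (y - x) / y ≤ Real.log y - Real.log x := by
  rw [← neg_le_neg_iff, neg_sub, ← neg_div, neg_sub]
  exact log_sub_log_le_sub_div hy hx

theorem log_sub_log_le_mul_sub_div (hx : 0 < x) (hxy : x ≤ y) (hyC : y ≤ C * x) :
    Real.log y - Real.log x ≤ C * ((y - x) / y) := by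
  have hy : 0 < y := hx.trans_le hxy
  calc Real.log y - Real.log x ≤ (y - x) / x := log_sub_log_le_sub_div hx hy
    _ = y / x * ((y - x) / y) := by field_simp
    _ ≤ C * ((y - x) / y) := by
      have hratio : y / x ≤ C := (div_le_iff₀ hx).2 hyC
      exact mul_le_mul_of_nonneg_right hratio (div_nonneg (sub_nonneg.2 hxy) hy.le)

theorem one_le_one_div_mul_log (hx : 0 < x) : 1 ≤ 1 / (x * Real.log ((x + 1) / x)) := by
  have hlog_pos : 0 < Real.log ((x + 1) / x) := Real.log_pos ((one_lt_div hx).2 (lt_add_one x))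
  have hlog_le : Real.log ((x + 1) / x) ≤ 1 / x := by
    rw [Real.log_div (by positivity) hx.ne']
    simpa using log_sub_log_le_sub_div hx (add_pos hx one_pos)
  rw [one_le_div (mul_pos hx hlog_pos), mul_comm]
  exact (le_div_iff₀ hx).1 hlog_le

end LogIncrement

section RelativeIncrement

variable {T : ℕ → ℝ} {m n : ℕ}

theorem sum_sub_div_le_log_sub_log (hmn : m ≤ n) (hT : ∀ k ∈ Finset.Icc m n, 0 < T k) :
    ∑ k ∈ Finset.Ico m n, (T (k + 1) - T k) / T (k + 1) ≤ Real.log (T n) - Real.log (T m) := by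
  rw [← Finset.sum_Ico_sub (fun k => Real.log (T k)) hmn]
  refine Finset.sum_le_sum fun k hk => ?_
  obtain ⟨hmk, hkn⟩ := Finset.mem_Ico.1 hk
  exact sub_div_le_log_sub_log (hT k (Finset.mem_Icc.2 ⟨hmk, hkn.le⟩))
    (hT (k + 1) (Finset.mem_Icc.2 ⟨hmk.trans k.le_succ, hkn⟩))

theorem log_sub_log_le_mul_sum_sub_div {C : ℝ} (hmn : m ≤ n)
    (hT : ∀ k ∈ Finset.Ico m n, 0 < T k) (hmono : ∀ k ∈ Finset.Ico m n, T k ≤ T (k + 1))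
    (hC : ∀ k ∈ Finset.Ico m n, T (k + 1) ≤ C * T k) :
    Real.log (T n) - Real.log (T m) ≤
      C * ∑ k ∈ Finset.Ico m n, (T (k + 1) - T k) / T (k + 1) := by
  rw [← Finset.sum_Ico_sub (fun k => Real.log (T k)) hmn, Finset.mul_sum]
  exact Finset.sum_le_sum fun k hk => log_sub_log_le_mul_sub_div (hT k hk) (hmono k hk) (hC k hk)

end RelativeIncrement

section PartialSum

theorem partialSum_succ (s : ℕ → ℝ) (n : ℕ) :
    partialSum s (n + 1) = partialSum s n + s (n + 1) :=
  Finset.sum_Icc_succ_top (Nat.le_add_left 1 n) s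

theorem sum_div_partialSum_eq_sum_sub_div (s : ℕ → ℝ) (m n : ℕ) :
    ∑ k ∈ Finset.Icc (m + 1) n, s k / partialSum s k =
      ∑ k ∈ Finset.Ico m n, (partialSum s (k + 1) - partialSum s k) / partialSum s (k + 1) := by
  have hincr (k : ℕ) : partialSum s (k + 1) - partialSum s k = s (k + 1) := by
    rw [partialSum_succ, add_sub_cancel_left]
  simp only [hincr]
  rw [Finset.sum_Ico_add' (fun k => s k / partialSum s k) m n 1, Finset.Ico_add_one_right_eq_Icc]

variable {s : ℕ → ℝ} {m n : ℕ} {γ M : ℝ}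

theorem partialSum_le_partialSum (hmn : m ≤ n) (hs : ∀ k ∈ Finset.Icc (m + 1) n, 0 ≤ s k) :
    partialSum s m ≤ partialSum s n := by
  refine Finset.sum_le_sum_of_subset_of_nonneg (Finset.Icc_subset_Icc_right hmn) ?_
  intro k hkn hkm
  refine hs k ?_
  simp only [Finset.mem_Icc] at hkn hkm ⊢
  omega

theorem le_partialSum_of_mem_Icc (hS : γ ≤ partialSum s m)
    (hs : ∀ k ∈ Finset.Icc (m + 1) n, 0 ≤ s k) {k : ℕ} (hk : k ∈ Finset.Icc m n) :
    γ ≤ partialSum s k := by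
  obtain ⟨hmk, hkn⟩ := Finset.mem_Icc.1 hk
  exact hS.trans <| partialSum_le_partialSum hmk fun j hj =>
    hs j (Finset.Icc_subset_Icc_right hkn hj)

theorem partialSum_succ_le_mul (hγ : 0 < γ) (hM : 0 ≤ M) (hS : γ ≤ partialSum s n)
    (hs : s (n + 1) ≤ M) : partialSum s (n + 1) ≤ (γ + M) / γ * partialSum s n :=
  calc partialSum s (n + 1) = partialSum s n + s (n + 1) := partialSum_succ s n
    _ ≤ partialSum s n + M * (partialSum s n / γ) := by
      gcongr
      exact hs.trans (le_mul_of_one_le_right hM ((one_le_div hγ).2 hS))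
    _ = (γ + M) / γ * partialSum s n := by field_simp

theorem sum_div_partialSum_le_log_sub_log (hmn : m ≤ n) (hS : 0 < partialSum s m)
    (hs : ∀ k ∈ Finset.Icc (m + 1) n, 0 ≤ s k) :
    ∑ k ∈ Finset.Icc (m + 1) n, s k / partialSum s k ≤
      Real.log (partialSum s n) - Real.log (partialSum s m) := by
  rw [sum_div_partialSum_eq_sum_sub_div]
  exact sum_sub_div_le_log_sub_log hmn fun k hk =>
    hS.trans_le (le_partialSum_of_mem_Icc le_rfl hs hk)

theorem mul_log_sub_log_le_sum_div_partialSum (hmn : m ≤ n) (hγ : 0 < γ) (hM : 0 ≤ M)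
    (hS : γ ≤ partialSum s m) (hs : ∀ k ∈ Finset.Icc (m + 1) n, 0 ≤ s k ∧ s k ≤ M) :
    γ / (γ + M) * (Real.log (partialSum s n) - Real.log (partialSum s m)) ≤
      ∑ k ∈ Finset.Icc (m + 1) n, s k / partialSum s k := by
  have hterm : ∀ k ∈ Finset.Ico m n, 0 ≤ s (k + 1) ∧ s (k + 1) ≤ M := fun k hk =>
    hs (k + 1) (by simp only [Finset.mem_Ico, Finset.mem_Icc] at hk ⊢; omega)
  have hge : ∀ k ∈ Finset.Ico m n, γ ≤ partialSum s k := fun k hk =>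
    le_partialSum_of_mem_Icc hS (fun j hj => (hs j hj).1) (Finset.Ico_subset_Icc_self hk)
  rw [sum_div_partialSum_eq_sum_sub_div, ← inv_div, inv_mul_le_iff₀ (by positivity)]
  refine log_sub_log_le_mul_sum_sub_div hmn (fun k hk => hγ.trans_le (hge k hk))
    (fun k hk => ?_) (fun k hk => partialSum_succ_le_mul hγ hM (hge k hk) (hterm k hk).2)
  rw [partialSum_succ]
  exact le_add_of_nonneg_right (hterm k hk).1

end PartialSum

theorem statement18_general (s : ℕ → ℝ) (a b : ℕ) (hab : a ≤ b) (M : ℝ)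
    (hs : ∀ k ∈ Finset.Icc a b, 0 ≤ s k ∧ s k ≤ M)
    (γ : ℝ) (hγ : 0 < γ) (hSa : γ ≤ partialSum s (a - 1)) :
    γ / (γ + M) * (Real.log (partialSum s b) - Real.log (partialSum s (a - 1))) ≤
        ∑ k ∈ Finset.Icc a b, s k / partialSum s k ∧
      ∑ k ∈ Finset.Icc a b, s k / partialSum s k ≤
        Real.log (partialSum s b) - Real.log (partialSum s (a - 1)) := by
  have hM : 0 ≤ M := (hs a (Finset.left_mem_Icc.2 hab)).elim le_trans
  cases a with
  | zero => exact absurd hSa (by simpa [partialSum] using hγ)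
  | succ m =>
    rw [Nat.add_sub_cancel] at hSa ⊢
    have hmb : m ≤ b := m.le_succ.trans hab
    exact ⟨mul_log_sub_log_le_sum_div_partialSum hmb hγ hM hSa hs,
      sum_div_partialSum_le_log_sub_log hmb (hγ.trans_le hSa) fun k hk => (hs k hk).1⟩

theorem statement18
    (s : ℕ → ℝ) (hs : ∀ n, 0 ≤ s n ∧ s n ≤ 1)
    (a b : ℕ) (ha : 2 ≤ a) (hab : a < b)
    (γ : ℝ) (hγ : 0 < γ) (hSa : γ ≤ partialSum s (a - 1)) :
    γ / (γ + 1) * (Real.log (partialSum s b) - Real.log (partialSum s (a - 1))) ≤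
        ∑ k ∈ Finset.Icc a b, s k / partialSum s k ∧
      ∑ k ∈ Finset.Icc a b, s k / partialSum s k ≤
        1 / (γ * Real.log ((γ + 1) / γ)) *
          (Real.log (partialSum s b) - Real.log (partialSum s (a - 1))) := by
  have hlog : Real.log (partialSum s (a - 1)) ≤ Real.log (partialSum s b) :=
    Real.log_le_log (hγ.trans_le hSa) (partialSum_le_partialSum (by omega) fun k _ => (hs k).1)
  exact (statement18_general s a b hab.le 1 (fun k _ => hs k) γ hγ hSa).imp_right fun hupper =>
    hupper.trans (le_mul_of_one_le_left (sub_nonneg.2 hlog) (one_le_one_div_mul_log hγ))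
end

section
/- Let (s_n)_{n≥1} be a sequence of real numbers with 0 ≤ s_n ≤ 1 for all n, set S_n := ∑_{k=1}^n s_k, let γ > 0, and set S̃_n := max(γ, S_n). Then ∑_{k=1}^∞ s_k/S̃_k² < (2γ+1)/γ². -/
/-!
Since `S_k - S_{k-1} = s_k`, the series is a lower Riemann sum of the decreasing function
`t ↦ 1 / max γ t ^ 2` along the partition `0 = S_0 ≤ S_1 ≤ ⋯`. It is therefore at most
`∫_0^∞ dt / max γ t ^ 2 = γ / γ ^ 2 + 1 / γ = 2 / γ`, which is less than `(2 * γ + 1) / γ ^ 2`.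
An explicit antiderivative replaces the integral and telescopes.
-/

section OrderedField

variable {K : Type*} [Field K] [LinearOrder K] {γ x y : K}

/-- The antiderivative of `t ↦ 1 / max γ t ^ 2` that vanishes at `0`, for `0 < γ`. The summand with
`min` grows only below `γ` and the one with `max` only above `γ`, so no case distinction is
needed. -/
def invMaxSqPrimitive (γ x : K) : K := min γ x / γ ^ 2 + (1 / γ - 1 / max γ x)

lemma invMaxSqPrimitive_zero (hγ : 0 ≤ γ) : invMaxSqPrimitive γ 0 = 0 := by
  simp [invMaxSqPrimitive, hγ]

variable [IsStrictOrderedRing K]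

lemma invMaxSqPrimitive_le_two_div (hγ : 0 < γ) (x : K) : invMaxSqPrimitive γ x ≤ 2 / γ :=
  calc invMaxSqPrimitive γ x
    _ ≤ γ / γ ^ 2 + (1 / γ - 0) := by
      unfold invMaxSqPrimitive
      gcongr
      · exact min_le_left γ x
      · exact one_div_nonneg.2 (le_max_of_le_left hγ.le)
    _ = 2 / γ := by field_simp; norm_num

lemma sub_div_sq_le_one_div_sub_one_div (hx : 0 < x) (hxy : x ≤ y) :
    (y - x) / y ^ 2 ≤ 1 / x - 1 / y := by
  have hy : 0 < y := hx.trans_le hxy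
  calc (y - x) / y ^ 2
    _ ≤ (y - x) / (x * y) := by
      rw [sq]
      exact div_le_div_of_nonneg_left (sub_nonneg.2 hxy) (mul_pos hx hy) (by gcongr)
    _ = 1 / x - 1 / y := by field_simp

lemma sub_div_max_sq_le_invMaxSqPrimitive_sub (hγ : 0 < γ) (hxy : x ≤ y) :
    (y - x) / max γ y ^ 2 ≤ invMaxSqPrimitive γ y - invMaxSqPrimitive γ x := by
  have hmin : 0 ≤ min γ y - min γ x := sub_nonneg.2 (min_le_min_left γ hxy)
  have hsplit : y - x = (min γ y - min γ x) + (max γ y - max γ x) := by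
    linarith [min_add_max γ x, min_add_max γ y]
  calc (y - x) / max γ y ^ 2
    _ = (min γ y - min γ x) / max γ y ^ 2 + (max γ y - max γ x) / max γ y ^ 2 := by
      rw [hsplit, add_div]
    _ ≤ (min γ y - min γ x) / γ ^ 2 + (1 / max γ x - 1 / max γ y) := by
      gcongr
      · exact le_max_left γ y
      · exact sub_div_sq_le_one_div_sub_one_div (lt_max_of_lt_left hγ) (max_le_max_left γ hxy)
    _ = invMaxSqPrimitive γ y - invMaxSqPrimitive γ x := by
      unfold invMaxSqPrimitive
      ring

lemma sum_range_sub_div_max_sq_le_two_div {S : ℕ → K} (hS : Monotone S) (hS₀ : S 0 = 0)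
    (hγ : 0 < γ) (n : ℕ) :
    ∑ k ∈ Finset.range n, (S (k + 1) - S k) / max γ (S (k + 1)) ^ 2 ≤ 2 / γ :=
  calc ∑ k ∈ Finset.range n, (S (k + 1) - S k) / max γ (S (k + 1)) ^ 2
    _ ≤ ∑ k ∈ Finset.range n, (invMaxSqPrimitive γ (S (k + 1)) - invMaxSqPrimitive γ (S k)) :=
      Finset.sum_le_sum fun k _ ↦ sub_div_max_sq_le_invMaxSqPrimitive_sub hγ (hS k.le_succ)
    _ = invMaxSqPrimitive γ (S n) := by
      rw [Finset.sum_range_sub fun k ↦ invMaxSqPrimitive γ (S k), hS₀,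
        invMaxSqPrimitive_zero hγ.le, sub_zero]
    _ ≤ 2 / γ := invMaxSqPrimitive_le_two_div hγ (S n)

lemma two_div_lt_two_mul_add_one_div_sq (hγ : 0 < γ) : 2 / γ < (2 * γ + 1) / γ ^ 2 :=
  calc 2 / γ
    _ = 2 * γ / γ ^ 2 := by field_simp
    _ < (2 * γ + 1) / γ ^ 2 := by gcongr; exact lt_add_one _

end OrderedField

lemma partialSum_zero (s : ℕ → ℝ) : partialSum s 0 = 0 := by
  simp [partialSum]

lemma partialSum_succ_sub_partialSum (s : ℕ → ℝ) (n : ℕ) :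
    partialSum s (n + 1) - partialSum s n = s (n + 1) :=
  sub_eq_of_eq_add' (Finset.sum_Icc_succ_top n.succ_pos s)

lemma monotone_partialSum {s : ℕ → ℝ} (hs : ∀ n, 0 ≤ s (n + 1)) : Monotone (partialSum s) :=
  monotone_nat_of_le_succ fun n ↦
    sub_nonneg.1 ((hs n).trans_eq (partialSum_succ_sub_partialSum s n).symm)

theorem statement19_general {s : ℕ → ℝ} (hs : ∀ n, 0 ≤ s (n + 1)) {γ : ℝ} (hγ : 0 < γ) :
    Summable (fun k : ℕ => s (k + 1) / max γ (partialSum s (k + 1)) ^ 2) ∧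
      ∑' k : ℕ, s (k + 1) / max γ (partialSum s (k + 1)) ^ 2 ≤ 2 / γ := by
  have hnonneg (k : ℕ) : 0 ≤ s (k + 1) / max γ (partialSum s (k + 1)) ^ 2 :=
    div_nonneg (hs k) (sq_nonneg _)
  have hbound (n : ℕ) :
      ∑ k ∈ Finset.range n, s (k + 1) / max γ (partialSum s (k + 1)) ^ 2 ≤ 2 / γ := by
    simpa only [partialSum_succ_sub_partialSum] using
      sum_range_sub_div_max_sq_le_two_div (monotone_partialSum hs) (partialSum_zero s) hγ n
  exact ⟨summable_of_sum_range_le hnonneg hbound, Real.tsum_le_of_sum_range_le hnonneg hbound⟩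

theorem statement19
    (s : ℕ → ℝ) (hs : ∀ n, 0 ≤ s n ∧ s n ≤ 1)
    (γ : ℝ) (hγ : 0 < γ) :
    Summable (fun k : ℕ => s (k + 1) / max γ (partialSum s (k + 1)) ^ 2) ∧
      ∑' k : ℕ, s (k + 1) / max γ (partialSum s (k + 1)) ^ 2 <
        (2 * γ + 1) / γ ^ 2 :=
  (statement19_general (fun n ↦ (hs (n + 1)).1) hγ).imp_right
    fun hle ↦ hle.trans_lt (two_div_lt_two_mul_add_one_div_sq hγ)
end
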